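/- (Rank lemma underlying conformal calibration.) Let N ≥ 1 and let u_1, …, u_{N+1} be exchangeable real-valued random variables on a common probability space. Then for every integer k with 1 ≤ k ≤ N+1, P( #{ i ∈ {1, …, N} : u_i < u_{N+1} } ≤ k − 1 ) ≥ k/(N+1). -/

import Mathlib

/-!
For a real tuple `v`, let `numBelow v j` be the number of entries strictly smaller than `v j`.
Sorting `v` shows that at least `k` indices `j` satisfy `numBelow v j ≤ k - 1`
(`le_card_numBelow`): each of the first `k` positions of the sorted tuple is such an index, ties
only helping. Integrating this pointwise bound against the joint law of `u` gives
`k ≤ ∑ j, P(numBelow u j ≤ k - 1)`. Permuting the tuple permutes `numBelow`, so by exchangeability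
the `N + 1` summands all equal the one for the last index, which is therefore at least
`k / (N + 1)`.
-/

open MeasureTheory

/-- Exchangeability of a finite family of real-valued random variables:
every permutation of the family has the same joint distribution. -/
def Exchangeable {Ω : Type*} [MeasurableSpace Ω] (P : Measure Ω)
    {n : ℕ} (u : Fin n → Ω → ℝ) : Prop :=
  ∀ σ : Equiv.Perm (Fin n),
    Measure.map (fun ω => fun i => u (σ i) ω) P
      = Measure.map (fun ω => fun i => u i ω) P

/-- The number of entries of `v` strictly smaller than `v j`. The index `j` itself never
contributes, so it need not be excluded. -/
noncomputable def numBelow {n : ℕ} (v : Fin n → ℝ) (j : Fin n) : ℕ :=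
  (Finset.univ.filter (fun i => v i < v j)).card

lemma numBelow_comp_perm {n : ℕ} (v : Fin n → ℝ) (σ : Equiv.Perm (Fin n)) (j : Fin n) :
    numBelow (fun i => v (σ i)) j = numBelow v (σ j) := by
  simp only [numBelow, Finset.card_filter]
  exact Equiv.sum_comp σ (fun i => if v i < v (σ j) then 1 else 0)

lemma numBelow_last {N : ℕ} (v : Fin (N + 1) → ℝ) :
    numBelow v (Fin.last N)
      = (Finset.univ.filter (fun i : Fin N => v (Fin.castSucc i) < v (Fin.last N))).card := by
  simp only [numBelow, Finset.card_filter, Fin.sum_univ_castSucc]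
  simp

lemma numBelow_sort_le {n : ℕ} (v : Fin n → ℝ) (m : Fin n) :
    numBelow v (Tuple.sort v m) ≤ m := by
  rw [← numBelow_comp_perm, numBelow]
  calc _ ≤ (Finset.Iio m).card := by
        refine Finset.card_le_card fun i hi => ?_
        simp only [Finset.mem_filter, Finset.mem_univ, true_and] at hi
        exact Finset.mem_Iio.2 ((Tuple.monotone_sort v).reflect_lt hi)
    _ = m := Fin.card_Iio m

/-- The deterministic core: at least `k` entries of a tuple have at most `k - 1` entries strictly
below them. -/
lemma le_card_numBelow {n : ℕ} (v : Fin n → ℝ) {k : ℕ} (hk1 : 1 ≤ k) (hk2 : k ≤ n) :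
    k ≤ (Finset.univ.filter (fun j => numBelow v j ≤ k - 1)).card := by
  -- The first `k` positions of the sorted tuple inject into the set being counted.
  have h := Finset.card_le_card_of_injOn (s := (Finset.univ : Finset (Fin k)))
    (t := Finset.univ.filter (fun j => numBelow v j ≤ k - 1))
    (fun m => Tuple.sort v (Fin.castLE hk2 m))
    (fun m _ => by
      have := numBelow_sort_le v (Fin.castLE hk2 m)
      have hm := m.2
      simp only [Fin.val_castLE] at this
      simp only [Finset.coe_filter, Finset.mem_univ, true_and, Set.mem_ofPred_eq]
      omega)
    (((Tuple.sort v).injective.comp (Fin.castLE_injective hk2)).injOn)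
  simpa using h

lemma measurable_numBelow {n : ℕ} (j : Fin n) :
    Measurable (fun v : Fin n → ℝ => numBelow v j) := by
  simp only [numBelow, Finset.card_filter]
  exact Finset.measurable_sum _ fun i _ =>
    Measurable.ite (measurableSet_lt (measurable_pi_apply i) (measurable_pi_apply j))
      measurable_const measurable_const

lemma measurableSet_numBelow_le {n : ℕ} (j : Fin n) (r : ℕ) :
    MeasurableSet {v : Fin n → ℝ | numBelow v j ≤ r} :=
  measurable_numBelow j (measurableSet_Iic (a := r))

/-- The bound of `le_card_numBelow` integrated against a probability law on tuples. -/
lemma le_sum_measure_numBelow {n : ℕ} (μ : Measure (Fin n → ℝ)) [IsProbabilityMeasure μ]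
    {k : ℕ} (hk1 : 1 ≤ k) (hk2 : k ≤ n) :
    (k : ENNReal) ≤ ∑ j, μ {v | numBelow v j ≤ k - 1} := by
  calc (k : ENNReal) = ∫⁻ _, (k : ENNReal) ∂μ := by simp
    _ ≤ ∫⁻ v, ∑ j, {v | numBelow v j ≤ k - 1}.indicator 1 v ∂μ := by
        refine lintegral_mono fun v => ?_
        have h : (k : ENNReal)
            ≤ ((Finset.univ.filter (fun j => numBelow v j ≤ k - 1)).card : ENNReal) := by
          exact_mod_cast le_card_numBelow v hk1 hk2
        simpa [Set.indicator_apply] using h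
    _ = ∑ j, μ {v | numBelow v j ≤ k - 1} := by
        rw [lintegral_finsetSum _ fun j _ =>
          measurable_one.indicator (measurableSet_numBelow_le j (k - 1))]
        exact Finset.sum_congr rfl fun j _ =>
          lintegral_indicator_one (measurableSet_numBelow_le j (k - 1))

/-- For exchangeable variables the law of `numBelow` does not depend on the index. -/
lemma Exchangeable.measure_numBelow_le_eq {Ω : Type*} [MeasurableSpace Ω] {P : Measure Ω}
    {n : ℕ} {u : Fin n → Ω → ℝ} (hexch : Exchangeable P u) (hmeas : ∀ i, Measurable (u i))
    (r : ℕ) (i j : Fin n) :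
    P {ω | numBelow (fun l => u l ω) i ≤ r} = P {ω | numBelow (fun l => u l ω) j ≤ r} := by
  have h := congrArg (fun μ => μ {v : Fin n → ℝ | numBelow v j ≤ r}) (hexch (Equiv.swap i j))
  rw [Measure.map_apply (measurable_pi_lambda _ fun l => hmeas _) (measurableSet_numBelow_le j r),
    Measure.map_apply (measurable_pi_lambda _ hmeas) (measurableSet_numBelow_le j r)] at h
  have hswap : ∀ ω, numBelow (fun l => u (Equiv.swap i j l) ω) j
      = numBelow (fun l => u l ω) i := fun ω => by
    rw [numBelow_comp_perm (fun l => u l ω), Equiv.swap_apply_right]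
  simpa only [Set.preimage_ofPred_eq, hswap] using h

/-- Rank lemma underlying conformal calibration. If
`u_1, …, u_{N+1}` are exchangeable real-valued random variables, then for every
`1 ≤ k ≤ N+1`,
`P(#{i ∈ {1,…,N} : u_i < u_{N+1}} ≤ k − 1) ≥ k/(N+1)`. -/
theorem rank_lemma
    {Ω : Type*} [MeasurableSpace Ω] (P : Measure Ω) [IsProbabilityMeasure P]
    (N : ℕ) (hN : 1 ≤ N) (u : Fin (N + 1) → Ω → ℝ)
    (hmeas : ∀ i, Measurable (u i))
    (hexch : Exchangeable P u)
    (k : ℕ) (hk1 : 1 ≤ k) (hk2 : k ≤ N + 1) :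
    (k : ℝ) / ((N : ℝ) + 1)
      ≤ (P {ω | (Finset.univ.filter
            (fun i : Fin N => u (Fin.castSucc i) ω < u (Fin.last N) ω)).card
          ≤ k - 1}).toReal := by
  have hu : Measurable (fun ω => fun i => u i ω) := measurable_pi_lambda _ hmeas
  have : IsProbabilityMeasure (Measure.map (fun ω => fun i => u i ω) P) :=
    Measure.isProbabilityMeasure_map hu.aemeasurable
  have hsum := le_sum_measure_numBelow (Measure.map (fun ω => fun i => u i ω) P) hk1 hk2
  have hterm : ∀ j, Measure.map (fun ω => fun i => u i ω) P {v | numBelow v j ≤ k - 1}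
      = P {ω | numBelow (fun i => u i ω) (Fin.last N) ≤ k - 1} := fun j => by
    rw [Measure.map_apply hu (measurableSet_numBelow_le j _)]
    exact hexch.measure_numBelow_le_eq hmeas (k - 1) j (Fin.last N)
  simp only [hterm, numBelow_last, Finset.sum_const, Finset.card_univ, Fintype.card_fin,
    nsmul_eq_mul] at hsum
  have hreal := ENNReal.toReal_mono
    (ENNReal.mul_ne_top (ENNReal.natCast_ne_top _) (measure_ne_top P _)) hsum
  rw [ENNReal.toReal_mul, ENNReal.toReal_natCast, ENNReal.toReal_natCast] at hreal
  rw [div_le_iff₀ (by positivity), mul_comm]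
  exact_mod_cast hreal
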